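/- Let k_d > 0, T_I > 0, h₀, h₁ ∈ ℝ³, and let k_p : [0,∞) → [0,1] be continuously differentiable with k_p(0) = 0, 0 ≤ k_p'(s) ≤ k_d/(2T_I²) for all s, and k_p'(s) = 0 for s ≥ T_I. Then there exists a constant C > 0, depending only on k_d and T_I, such that for every continuously differentiable ℓ : [0,∞) → ℝ³, setting h(t) = h₀ + ∫₀ᵗ ℓ(s) ds, one has for all T > 0 and all t ∈ [0,T]: ∫₀ᵗ (d/ds)[k_p(s)(h₁ − h(s))]·ℓ'(s) ds ≤ C(|h₁ − h₀|² + ∫₀ᵀ |ℓ(s)|² ds) + (k_d/2)∫₀ᵀ |ℓ'(s)|² ds. -/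

import Mathlib

open MeasureTheory
open scoped RealInnerProductSpace

noncomputable section

theorem cs_aux (ℓ : ℝ → EuclideanSpace ℝ (Fin 3)) (hc : Continuous ℓ) (s : ℝ) (hs : 0 ≤ s) :
    ‖∫ x in (0:ℝ)..s, ℓ x‖ ^ 2 ≤ s * ∫ x in (0:ℝ)..s, ‖ℓ x‖ ^ 2 := by
  rcases hs.eq_or_lt with rfl | hs0
  · simp
  have h1 : ‖∫ x in (0:ℝ)..s, ℓ x‖ ≤ ∫ x in (0:ℝ)..s, ‖ℓ x‖ :=
    intervalIntegral.norm_integral_le_integral_norm hs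
  set N := ∫ x in (0:ℝ)..s, ‖ℓ x‖ with hN
  have h2 : 0 ≤ ∫ x in (0:ℝ)..s, (s * ‖ℓ x‖ - N) ^ 2 :=
    intervalIntegral.integral_nonneg hs (fun x _ => sq_nonneg _)
  have h3 : ∫ x in (0:ℝ)..s, (s * ‖ℓ x‖ - N) ^ 2
      = s ^ 2 * (∫ x in (0:ℝ)..s, ‖ℓ x‖ ^ 2) - 2 * s * N * N + s * N ^ 2 := by
    have e : (fun x => (s * ‖ℓ x‖ - N) ^ 2)
        = fun x => (s ^ 2 * ‖ℓ x‖ ^ 2 - 2 * s * N * ‖ℓ x‖) + N ^ 2 := by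
      funext x; ring
    have i1 : IntervalIntegrable (fun x => s ^ 2 * ‖ℓ x‖ ^ 2) volume 0 s :=
      Continuous.intervalIntegrable (by fun_prop) _ _
    have i2 : IntervalIntegrable (fun x => 2 * s * N * ‖ℓ x‖) volume 0 s :=
      Continuous.intervalIntegrable (by fun_prop) _ _
    rw [e, intervalIntegral.integral_add (i1.sub i2) (by simp),
      intervalIntegral.integral_sub i1 i2, intervalIntegral.integral_const_mul,
      intervalIntegral.integral_const_mul, intervalIntegral.integral_const]
    simp [hN]
  rw [h3] at h2
  have h4 : 0 ≤ s * (s * (∫ x in (0:ℝ)..s, ‖ℓ x‖ ^ 2) - N ^ 2) := by nlinarith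
  have h5 := nonneg_of_mul_nonneg_right h4 hs0
  have h6 : ‖∫ x in (0:ℝ)..s, ℓ x‖ ^ 2 ≤ N ^ 2 := by gcongr
  linarith

/-- Estimate (2-RHS8): under the hypotheses (hypkp) on `k_p`, there is a constant `C > 0`
depending only on `k_d` and `T_I` such that for every `C¹` velocity `ℓ`, with
`h t = h₀ + ∫₀ᵗ ℓ`, for all `T > 0` and `t ∈ [0,T]`,
`∫₀ᵗ (d/ds)[k_p (h₁−h)]·ℓ' ≤ C(|h₁−h₀|² + ∫₀ᵀ |ℓ|²) + (k_d/2)∫₀ᵀ |ℓ'|²`. -/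
theorem stmt8 (kd TI : ℝ) (hkd : 0 < kd) (hTI : 0 < TI) :
    ∃ C > (0:ℝ), ∀ (h₀ h₁ : EuclideanSpace ℝ (Fin 3)) (kp kp' : ℝ → ℝ),
      (∀ s : ℝ, HasDerivAt kp (kp' s) s) → Continuous kp' → kp 0 = 0 →
      (∀ s : ℝ, 0 ≤ s → kp s ∈ Set.Icc (0:ℝ) 1) →
      (∀ s : ℝ, 0 ≤ s → 0 ≤ kp' s ∧ kp' s ≤ kd / (2 * TI ^ 2)) →
      (∀ s : ℝ, TI ≤ s → kp' s = 0) →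
      ∀ (ℓ ℓ' : ℝ → EuclideanSpace ℝ (Fin 3)),
      (∀ s : ℝ, HasDerivAt ℓ (ℓ' s) s) → Continuous ℓ' →
      ∀ h : ℝ → EuclideanSpace ℝ (Fin 3),
      (∀ t : ℝ, h t = h₀ + ∫ s in (0:ℝ)..t, ℓ s) →
      ∀ T : ℝ, 0 < T → ∀ t ∈ Set.Icc (0:ℝ) T,
        (∫ s in (0:ℝ)..t, ⟪kp' s • (h₁ - h s) - kp s • ℓ s, ℓ' s⟫)
          ≤ C * (‖h₁ - h₀‖ ^ 2 + ∫ s in (0:ℝ)..T, ‖ℓ s‖ ^ 2)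
            + (kd / 2) * ∫ s in (0:ℝ)..T, ‖ℓ' s‖ ^ 2 := by
  set M := kd / (2 * TI ^ 2) with hM
  have hMpos : 0 < M := by positivity
  refine ⟨(2 * M * (1 + TI) + 1) / kd, by positivity, ?_⟩
  intro h₀ h₁ kp kp' hkp hkpc' hkp0 hkpI hkpB hkpz ℓ ℓ' hℓ hℓc' h hh T hT t ht
  obtain ⟨ht0, htT⟩ := ht
  have hkpc : Continuous kp := continuous_iff_continuousAt.2 fun s => (hkp s).continuousAt
  have hℓc : Continuous ℓ := continuous_iff_continuousAt.2 fun s => (hℓ s).continuousAt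
  have hhc : Continuous h := by
    have : h = fun t => h₀ + ∫ s in (0:ℝ)..t, ℓ s := funext hh
    rw [this]
    exact continuous_const.add
      (intervalIntegral.continuous_primitive (fun a b => hℓc.intervalIntegrable a b) 0)
  have mono : ∀ (f : ℝ → ℝ), Continuous f → (∀ x, 0 ≤ f x) → ∀ s, 0 ≤ s → s ≤ T →
      ∫ x in (0:ℝ)..s, f x ≤ ∫ x in (0:ℝ)..T, f x := by
    intro f hf hf0 s hs0 hsT
    exact intervalIntegral.integral_mono_interval le_rfl hs0 hsT
      (Filter.Eventually.of_forall hf0) (hf.intervalIntegrable _ _)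
  have mA := mono (fun x => ‖ℓ x‖ ^ 2) (by fun_prop) (fun x => by positivity)
  have mB := mono (fun x => ‖ℓ' x‖ ^ 2) (by fun_prop) (fun x => by positivity)
  have hA0 : 0 ≤ ∫ x in (0:ℝ)..T, ‖ℓ x‖ ^ 2 :=
    intervalIntegral.integral_nonneg hT.le (fun x _ => by positivity)
  set A := ∫ x in (0:ℝ)..T, ‖ℓ x‖ ^ 2 with hA
  set B := ∫ x in (0:ℝ)..T, ‖ℓ' x‖ ^ 2 with hB
  set K := 2 * (‖h₁ - h₀‖ ^ 2 + TI * A) with hK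
  have hK0 : 0 ≤ K := by positivity
  have key : ∀ s, 0 ≤ s → s ≤ TI → s ≤ T → ‖h₁ - h s‖ ^ 2 ≤ K := by
    intro s hs hsI hsT
    have e : h₁ - h s = (h₁ - h₀) - ∫ x in (0:ℝ)..s, ℓ x := by rw [hh s]; abel
    have c := cs_aux ℓ hℓc s hs
    have c2 : s * ∫ x in (0:ℝ)..s, ‖ℓ x‖ ^ 2 ≤ TI * A :=
      mul_le_mul hsI (mA s hs hsT)
        (intervalIntegral.integral_nonneg hs (fun x _ => by positivity)) hTI.le
    have n := norm_sub_le (h₁ - h₀) (∫ x in (0:ℝ)..s, ℓ x)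
    rw [← e] at n
    have n2 := pow_le_pow_left₀ (norm_nonneg _) n 2
    nlinarith [sq_nonneg (‖h₁ - h₀‖ - ‖∫ x in (0:ℝ)..s, ℓ x‖)]
  have pt : ∀ s ∈ Set.Icc (0:ℝ) t, ⟪kp' s • (h₁ - h s) - kp s • ℓ s, ℓ' s⟫
      ≤ ((kd / 2) * ‖ℓ' s‖ ^ 2 + (1 / kd) * ‖ℓ s‖ ^ 2) + (M * K / kd) * kp' s := by
    rintro s ⟨hs0, hst⟩
    obtain ⟨p0, pM⟩ := hkpB s hs0
    obtain ⟨q0, q1⟩ := hkpI s hs0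
    have b1 : kp' s ^ 2 * ‖h₁ - h s‖ ^ 2 ≤ M * K * kp' s := by
      rcases le_total s TI with hsI | hsI
      · have k := key s hs0 hsI (hst.trans htT)
        calc kp' s ^ 2 * ‖h₁ - h s‖ ^ 2 ≤ kp' s ^ 2 * K := by gcongr
          _ = kp' s * K * kp' s := by ring
          _ ≤ M * K * kp' s := by gcongr
      · simp [hkpz s hsI]
    have b2 : kp s ^ 2 * ‖ℓ s‖ ^ 2 ≤ ‖ℓ s‖ ^ 2 := by
      have : kp s ^ 2 ≤ 1 := pow_le_one₀ q0 q1
      nlinarith [sq_nonneg ‖ℓ s‖]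
    have c1 := real_inner_le_norm (kp' s • (h₁ - h s) - kp s • ℓ s) (ℓ' s)
    have c2 : ‖kp' s • (h₁ - h s) - kp s • ℓ s‖ ≤ kp' s * ‖h₁ - h s‖ + kp s * ‖ℓ s‖ := by
      refine (norm_sub_le _ _).trans ?_
      rw [norm_smul, norm_smul, Real.norm_of_nonneg p0, Real.norm_of_nonneg q0]
    have c3 := mul_le_mul_of_nonneg_right c2 (norm_nonneg (ℓ' s))
    have y : ∀ a b : ℝ, a * b ≤ (kd / 4) * b ^ 2 + a ^ 2 / kd := by
      intro a b
      have : (kd / 4) * b ^ 2 + a ^ 2 / kd - a * b = (kd * b / 2 - a) ^ 2 / kd := by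
        field_simp; ring
      have : 0 ≤ (kd * b / 2 - a) ^ 2 / kd := by positivity
      linarith
    have y1 := y (kp' s * ‖h₁ - h s‖) ‖ℓ' s‖
    have y2 := y (kp s * ‖ℓ s‖) ‖ℓ' s‖
    rw [mul_pow] at y1 y2
    have d1 := div_le_div_of_nonneg_right b1 hkd.le
    have d2 := div_le_div_of_nonneg_right b2 hkd.le
    have e1 : (M * K / kd) * kp' s = M * K * kp' s / kd := by ring
    have e2 : (1 / kd) * ‖ℓ s‖ ^ 2 = ‖ℓ s‖ ^ 2 / kd := by ring
    rw [e1, e2]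
    linarith
  have i1 : IntervalIntegrable (fun s => (kd / 2) * ‖ℓ' s‖ ^ 2) volume 0 t :=
    Continuous.intervalIntegrable (by fun_prop) _ _
  have i2 : IntervalIntegrable (fun s => (1 / kd) * ‖ℓ s‖ ^ 2) volume 0 t :=
    Continuous.intervalIntegrable (by fun_prop) _ _
  have i3 : IntervalIntegrable (fun s => (M * K / kd) * kp' s) volume 0 t :=
    Continuous.intervalIntegrable (by fun_prop) _ _
  have I := intervalIntegral.integral_mono_on ht0
    (Continuous.intervalIntegrable (by fun_prop) _ _) ((i1.add i2).add i3) pt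
  rw [intervalIntegral.integral_add (i1.add i2) i3, intervalIntegral.integral_add i1 i2,
    intervalIntegral.integral_const_mul, intervalIntegral.integral_const_mul,
    intervalIntegral.integral_const_mul,
    intervalIntegral.integral_eq_sub_of_hasDerivAt (fun s _ => hkp s)
      (hkpc'.intervalIntegrable _ _), hkp0, sub_zero] at I
  have f1 := mul_le_mul_of_nonneg_left (mB t ht0 htT) (by positivity : 0 ≤ kd / 2)
  have f2 := mul_le_mul_of_nonneg_left (mA t ht0 htT) (by positivity : 0 ≤ 1 / kd)
  have f3 := mul_le_mul_of_nonneg_left (hkpI t ht0).2 (by positivity : 0 ≤ M * K / kd)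
  have f4 : 1 / kd * A + M * K / kd * 1
      ≤ (2 * M * (1 + TI) + 1) / kd * (‖h₁ - h₀‖ ^ 2 + A) := by
    have : (2 * M * (1 + TI) + 1) / kd * (‖h₁ - h₀‖ ^ 2 + A) - (1 / kd * A + M * K / kd * 1)
        = (2 * M * TI * ‖h₁ - h₀‖ ^ 2 + ‖h₁ - h₀‖ ^ 2 + 2 * M * A) / kd := by
      rw [hK]; ring
    have : 0 ≤ (2 * M * TI * ‖h₁ - h₀‖ ^ 2 + ‖h₁ - h₀‖ ^ 2 + 2 * M * A) / kd := by positivity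
    linarith
  linarith
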